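/- Let q be a real number, a < 0 and b real. Define f : ℍ → ℂ by f(τ) := − (−4πa)^{1−q/2} · ( ∫_{−4πa·Im τ}^{∞} t^{q/2−2} e^{−t} dt ) · exp(2πi (a+b) τ) (the integral is the incomplete Gamma value Γ(q/2−1, −4πa·Im τ), which converges since −4πa·Im τ > 0). Then for every τ ∈ ℍ: (L f)(τ) = −2i (Im τ)² ∂_τ̄ f(τ) = (Im τ)^{q/2} · exp(2πi (b τ + a τ̄)). -/

import Mathlib

/-!
Put `c = -4πa > 0`. The factor `exp(2πi(a+b)τ)` is holomorphic, so it is killed by `∂_τ̄`, and `∂_τ̄`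
acts on a function of `v = Im τ` as `(i/2) d/dv`. By the fundamental theorem of calculus
(`hasDerivAt_upperGamma`) the incomplete Gamma factor has derivative `-c (cv)^{q/2-2} e^{-cv}` in `v`;
the powers of `c` cancel, leaving `v^{q/2} e^{-cv} exp(2πi(a+b)τ)`, and
`-cv + 2πi(a+b)τ = 2πi(bτ + aτ̄)`. The Wirtinger derivative is computed from the full real Fréchet
derivative (`hasFDerivAt_im_mul_cexp`), so no default value of `fderiv` enters.
-/

open Complex Real MeasureTheory

noncomputable section

/-- Wirtinger derivative `∂_τ̄ f = (∂_u f + i ∂_v f)/2`. -/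
def wdzbar (f : ℂ → ℂ) (z : ℂ) : ℂ :=
  (fderiv ℝ f z 1 + Complex.I * fderiv ℝ f z Complex.I) / 2

/-- Lowering operator `L f = −2i v² ∂_τ̄ f`. -/
def lowerOp (f : ℂ → ℂ) : ℂ → ℂ :=
  fun z => -2 * Complex.I * (z.im : ℂ) ^ 2 * wdzbar f z

/-- The integrand is continuous on `[x, ∞)` and decays exponentially, so the exponent `s` is arbitrary
once `x > 0`. -/
lemma integrableOn_rpow_mul_exp_neg_Ioi (s : ℝ) {x : ℝ} (hx : 0 < x) :
    IntegrableOn (fun t : ℝ => t ^ s * Real.exp (-t)) (Set.Ioi x) := by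
  refine integrable_of_isBigO_exp_neg (b := 1 / 2) (by norm_num) ?_ ?_
  · refine ContinuousOn.mul (fun t ht => ?_) (by fun_prop)
    exact (Real.continuousAt_rpow_const t s
      (Or.inl (hx.trans_le (Set.mem_Ici.mp ht)).ne')).continuousWithinAt
  · have h := (Real.Gamma_integrand_isLittleO s).isBigO
    simpa [mul_comm] using h

/-- `d/dx Γ(s + 1, x) = -x ^ s e ^ (-x)` for `x > 0`. -/
lemma hasDerivAt_upperGamma (s : ℝ) {x : ℝ} (hx : 0 < x) :
    HasDerivAt (fun y : ℝ => ∫ t in Set.Ioi y, t ^ s * Real.exp (-t))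
      (-(x ^ s * Real.exp (-x))) x := by
  set g : ℝ → ℝ := fun t => t ^ s * Real.exp (-t) with hg
  have hcont : ∀ t : ℝ, 0 < t → ContinuousAt g t := fun t ht =>
    (Real.continuousAt_rpow_const t s (Or.inl ht.ne')).mul (by fun_prop)
  have hii : IntervalIntegrable g volume (x / 2) x := by
    refine ContinuousOn.intervalIntegrable fun t ht => (hcont t ?_).continuousWithinAt
    rw [Set.uIcc_of_le (by linarith)] at ht
    linarith [ht.1]
  have hmeas : StronglyMeasurable g := Measurable.stronglyMeasurable (by fun_prop)
  have hder := (intervalIntegral.integral_hasDerivAt_right hii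
    hmeas.stronglyMeasurableAtFilter (hcont x hx)).const_sub (∫ t in Set.Ioi (x / 2), g t)
  refine hder.congr_of_eventuallyEq ?_
  filter_upwards [lt_mem_nhds hx] with y hy
  have h := intervalIntegral.integral_interval_add_Ioi
    (integrableOn_rpow_mul_exp_neg_Ioi s (half_pos hx)) (integrableOn_rpow_mul_exp_neg_Ioi s hy)
  exact eq_sub_of_add_eq' h

/-- Real Fréchet derivative of `z ↦ h(Im z) · exp(k z)`: the first summand depends on `Im` alone and the
second is complex linear. -/
lemma hasFDerivAt_im_mul_cexp {h : ℝ → ℝ} {h' : ℝ} (k z : ℂ) (hh : HasDerivAt h h' z.im) :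
    HasFDerivAt (fun w : ℂ => (h w.im : ℂ) * Complex.exp (k * w))
      ((h z.im : ℂ) • ((Complex.exp (k * z) * k) • (ContinuousLinearMap.id ℝ ℂ)) +
        Complex.exp (k * z) • (Complex.ofRealCLM.comp (h' • Complex.imCLM))) z := by
  have h1 : HasFDerivAt (fun w : ℂ => h w.im) (h' • Complex.imCLM) z :=
    hh.comp_hasFDerivAt z Complex.imCLM.hasFDerivAt
  have h2 : HasFDerivAt (fun w : ℂ => (h w.im : ℂ))
      (Complex.ofRealCLM.comp (h' • Complex.imCLM)) z :=
    Complex.ofRealCLM.hasFDerivAt.comp z h1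
  have h3 : HasDerivAt (fun w : ℂ => Complex.exp (k * w)) (Complex.exp (k * z) * k) z := by
    simpa using ((hasDerivAt_id z).const_mul k).cexp
  have h4 : HasFDerivAt (fun w : ℂ => Complex.exp (k * w))
      ((Complex.exp (k * z) * k) • (ContinuousLinearMap.id ℝ ℂ)) z := by
    refine (h3.hasFDerivAt.restrictScalars ℝ).congr_fderiv ?_
    ext
    simp [mul_comm]
  exact h2.mul h4

/-- `∂_τ̄` annihilates the holomorphic factor and acts on functions of `v` as `(i/2) d/dv`. -/
lemma wdzbar_im_mul_cexp {h : ℝ → ℝ} {h' : ℝ} (k z : ℂ) (hh : HasDerivAt h h' z.im) :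
    wdzbar (fun w : ℂ => (h w.im : ℂ) * Complex.exp (k * w)) z =
      Complex.I / 2 * h' * Complex.exp (k * z) := by
  rw [wdzbar, (hasFDerivAt_im_mul_cexp k z hh).fderiv]
  simp
  linear_combination ((h z.im : ℂ) * Complex.exp (k * z) * k / 2) * Complex.I_mul_I

/-- Equation (3.9) of the paper (generic case): the lowering operator applied to
the singular Schwartz function `φ^{W,*}` yields the Gaussian `φ^{W}`. -/
theorem lower_incomplete_gamma_whittaker (q a b : ℝ) (ha : a < 0) :
    ∀ τ : ℂ, 0 < τ.im →
      lowerOp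
        (fun τ' => -((((-(4 * Real.pi * a)) ^ (1 - q / 2) : ℝ)) : ℂ) *
          (((∫ t in Set.Ioi (-(4 * Real.pi * a) * τ'.im),
              t ^ (q / 2 - 2) * Real.exp (-t)) : ℝ) : ℂ) *
          Complex.exp (2 * Real.pi * Complex.I * ((a + b : ℝ) : ℂ) * τ')) τ =
      (((τ.im ^ (q / 2) : ℝ)) : ℂ) *
        Complex.exp (2 * Real.pi * Complex.I *
          (((b : ℝ) : ℂ) * τ + ((a : ℝ) : ℂ) * (starRingEnd ℂ τ))) := by
  intro τ hτ
  have hc : 0 < -(4 * Real.pi * a) := by nlinarith [Real.pi_pos]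
  set c : ℝ := -(4 * Real.pi * a) with hcdef
  have hG : HasDerivAt
      (fun v : ℝ => -(c ^ (1 - q / 2)) * ∫ t in Set.Ioi (c * v), t ^ (q / 2 - 2) * Real.exp (-t))
      (τ.im ^ (q / 2 - 2) * Real.exp (-(c * τ.im))) τ.im := by
    have h1 : HasDerivAt (fun v : ℝ => c * v) c τ.im := by
      simpa using (hasDerivAt_id τ.im).const_mul c
    have h2 := ((hasDerivAt_upperGamma (q / 2 - 2) (mul_pos hc hτ)).comp τ.im h1).const_mul
      (-(c ^ (1 - q / 2)))
    refine h2.congr_deriv ?_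
    have hp : c ^ (1 - q / 2) * c ^ (q / 2 - 2) * c = 1 := by
      rw [← Real.rpow_add hc, ← Real.rpow_add_one hc.ne']
      ring_nf
      exact Real.rpow_zero c
    rw [Real.mul_rpow hc.le hτ.le]
    linear_combination (τ.im ^ (q / 2 - 2) * Real.exp (-(c * τ.im))) * hp
  have hw := wdzbar_im_mul_cexp (2 * Real.pi * Complex.I * ((a + b : ℝ) : ℂ)) τ hG
  simp only [Complex.ofReal_mul, Complex.ofReal_neg] at hw
  rw [lowerOp, hw]
  have hv : τ.im ^ 2 * τ.im ^ (q / 2 - 2) = τ.im ^ (q / 2) := by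
    rw [← Real.rpow_natCast, ← Real.rpow_add hτ]
    congr 1
    push_cast
    ring
  have hexp : Complex.exp (2 * Real.pi * Complex.I *
        ((b : ℂ) * τ + (a : ℂ) * (starRingEnd ℂ τ))) =
      (Real.exp (-(c * τ.im)) : ℂ) *
        Complex.exp (2 * Real.pi * Complex.I * ((a + b : ℝ) : ℂ) * τ) := by
    have hconj : starRingEnd ℂ τ = τ - 2 * τ.im * Complex.I := by
      apply Complex.ext <;> simp
      ring
    rw [Complex.ofReal_exp, ← Complex.exp_add, hconj, hcdef]
    congr 1
    push_cast
    linear_combination (-4 * Real.pi * a * τ.im : ℂ) * Complex.I_mul_I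
  rw [hexp, ← hv]
  push_cast
  linear_combination (-(τ.im : ℂ) ^ 2 * ((τ.im ^ (q / 2 - 2) : ℝ) : ℂ) *
    Complex.exp (-(c * τ.im)) *
    Complex.exp (2 * Real.pi * Complex.I * (a + b) * τ)) * Complex.I_mul_I
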